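/- In the r-state Markov chain model, if at least one of the trace lengths m(n) or l(n) is less than or equal to c·n^{2/(|E|−r)−α} for some constants c > 0 and α > 0, then user 1 has perfect anonymity: the Shannon conditional entropy H(Π(1) | W, Y) tends to +∞ as n → ∞. -/

import Mathlib

open MeasureTheory ProbabilityTheory Filter
open scoped ENNReal NNReal

/-- The open region `{x ∈ (0,1)^d : xᵢ > 0, x₁ + ⋯ + x_d < 1}` of admissible parameters. -/
def simplexRegion (d : ℕ) : Set (Fin d → ℝ) :=
  {x | (∀ i, 0 < x i) ∧ ∑ i, x i < 1}

/-- Law of a length-`m` sample path of the Markov chain on `Fin r` with transition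
matrix `M` and initial distribution `π0`: the path `x` has probability
`π0 (x 0) * ∏_{k>0} M (x (k-1)) (x k)`. -/
noncomputable def pathLaw {r : ℕ} (M : Matrix (Fin r) (Fin r) ℝ) (π0 : Fin r → ℝ) (m : ℕ) :
    Measure (Fin m → Fin r) :=
  ∑ x : Fin m → Fin r,
    ENNReal.ofReal (∏ k : Fin m,
      if (k : ℕ) = 0 then π0 (x k)
      else M (x ⟨(k : ℕ) - 1, lt_of_le_of_lt (Nat.sub_le _ _) k.isLt⟩) (x k)) •
    Measure.dirac x

/-- Joint law of (parameters, actual traces, training traces) in the `r`-state Markov chain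
model: the parameter vectors `p u` (of dimension `d = |E| - r`) are i.i.d. with law `μP`,
and conditionally on the parameters the actual trace (of length `m`) and the training trace
(of length `l`) of user `u` are independent sample paths of the Markov chain with transition
matrix `T (p u)` and initial distribution `π0 (p u)`; all traces are mutually independent
across users. -/
noncomputable def markovLaw (n m l r d : ℕ) (T : (Fin d → ℝ) → Matrix (Fin r) (Fin r) ℝ)
    (π0 : (Fin d → ℝ) → Fin r → ℝ) (μP : Measure (Fin d → ℝ)) :
    Measure ((Fin n → Fin d → ℝ) × (Fin n → Fin m → Fin r) × (Fin n → Fin l → Fin r)) :=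
  (Measure.pi fun _ : Fin n => μP).bind fun p =>
    (Measure.dirac p).prod
      ((Measure.pi fun u : Fin n => pathLaw (T (p u)) (π0 (p u)) m).prod
        (Measure.pi fun u : Fin n => pathLaw (T (p u)) (π0 (p u)) l))

/-- Shannon conditional entropy `H(A | B)` of discrete random variables `A` and `B`. -/
noncomputable def shCondEntropy {Ω α β : Type*} [MeasurableSpace Ω] (μ : Measure Ω)
    (A : Ω → α) (B : Ω → β) : ℝ :=
  -∑' (a : α) (b : β),
    (μ (A ⁻¹' {a} ∩ B ⁻¹' {b})).toReal *
      Real.log ((μ (A ⁻¹' {a} ∩ B ⁻¹' {b})).toReal / (μ (B ⁻¹' {b})).toReal)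

/-!
The idea is universal coding. Mixing the transition matrices over Jeffreys' prior on each row
(Krichevsky–Trofimov) gives one sub-probability mass function `Q` on paths of length `s` with
`P_θ(x) ≤ K * Q(x)` for *every* chain `θ` on the edge set `E`, where
`K = r * exp (|E| / 2 + r) * (s + 1) ^ ((|E| - r) / 2)`. Apply this to the shorter of the two
traces of each user: given `Π = σ`, each value `(w, y)` of the observation `(W, Y)` has probability
at most `K ^ n * R(w, y)`, with a sub-probability `R` that does not depend on `σ`. Since `Π` is
uniform, `H(Π | W, Y) ≥ log n! - n log K`. By subadditivity and exchangeability
`n H(Π(1) | W, Y) ≥ H(Π | W, Y)`, hence `H(Π(1) | W, Y) ≥ log n! / n - log K`. If the shorter trace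
has length `O(n ^ (2 / (|E| - r) - α))`, then `K = O(n ^ γ)` with `γ < 1`, and the bound grows like
`(1 - γ) log n`.
-/

section ConditionalEntropy

variable {α β γ ι : Type*} [Fintype α] [Fintype β]

lemma mul_log_div_le_sub {p q : ℝ} (hp : 0 ≤ p) (hq : 0 ≤ q) (hqp : q = 0 → p = 0) :
    p * Real.log (q / p) ≤ q - p := by
  rcases hp.eq_or_lt with rfl | hp
  · simpa using hq
  have hq' : 0 < q := hq.lt_of_ne' fun h ↦ hp.ne' (hqp h)
  calc p * Real.log (q / p) ≤ p * (q / p - 1) := by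
        gcongr
        exact Real.log_le_sub_one_of_pos (div_pos hq' hp)
    _ = q - p := by field_simp

lemma gibbs_inequality {p q : α → ℝ} (hp : ∀ i, 0 ≤ p i) (hq : ∀ i, 0 ≤ q i)
    (hqp : ∀ i, q i = 0 → p i = 0) (hsum : ∑ i, q i ≤ ∑ i, p i) :
    ∑ i, p i * Real.log (q i / p i) ≤ 0 :=
  calc ∑ i, p i * Real.log (q i / p i) ≤ ∑ i, (q i - p i) :=
        Finset.sum_le_sum fun i _ ↦ mul_log_div_le_sub (hp i) (hq i) (hqp i)
    _ ≤ 0 := by rw [Finset.sum_sub_distrib]; linarith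

/-- Conditional entropy `H(A | B)`, in nats, of a pair `(A, B)` of finitely valued random variables
with joint mass function `p`. -/
noncomputable def condEntropy (p : α → β → ℝ) : ℝ :=
  -∑ a, ∑ b, p a b * Real.log (p a b / ∑ a', p a' b)

/-- Joint mass function of `(f A, B)` when `p` is the joint mass function of `(A, B)`. -/
def pushforwardFst [DecidableEq γ] (f : α → γ) (p : α → β → ℝ) (c : γ) (b : β) : ℝ :=
  ∑ a with f a = c, p a b

lemma condEntropy_comp_equiv (p : α → β → ℝ) (e : β ≃ β) :
    condEntropy (fun a b ↦ p a (e b)) = condEntropy p := by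
  unfold condEntropy
  congr! 2 with a
  exact Equiv.sum_comp e fun b ↦ p a b * Real.log (p a b / ∑ a', p a' b)

omit [Fintype β] in
lemma le_sum_of_nonneg {p : α → β → ℝ} (hp : ∀ a b, 0 ≤ p a b) (a : α) (b : β) :
    p a b ≤ ∑ a', p a' b :=
  Finset.single_le_sum (f := fun a' ↦ p a' b) (fun a' _ ↦ hp a' b) (Finset.mem_univ a)

lemma neg_log_le_condEntropy {p : α → β → ℝ} {R : β → ℝ} {D : ℝ} (hp : ∀ a b, 0 ≤ p a b)
    (hsum : ∑ a, ∑ b, p a b = 1) (hR : ∀ b, 0 ≤ R b) (hRsum : ∑ b, R b ≤ 1) (hD : 0 < D)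
    (hpR : ∀ a b, p a b ≤ D * R b) : -Real.log D ≤ condEntropy p := by
  set t : β → ℝ := fun b ↦ ∑ a, p a b with ht
  have htsum : ∑ b, t b = 1 := by rw [← hsum, Finset.sum_comm]
  have hpt : ∀ a b, p a b ≤ t b := le_sum_of_nonneg hp
  have ht0 : ∀ b, 0 ≤ t b := fun b ↦ Finset.sum_nonneg fun a _ ↦ hp a b
  have hRt : ∀ b, R b = 0 → t b = 0 := fun b h ↦
    Finset.sum_eq_zero fun a _ ↦ le_antisymm (by simpa [h] using hpR a b) (hp a b)
  have hterm (a : α) (b : β) : p a b * Real.log (p a b / t b) ≤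
      p a b * Real.log D + p a b * Real.log (R b / t b) := by
    rcases (hp a b).eq_or_lt with h | h
    · simp [← h]
    have htb : 0 < t b := h.trans_le (hpt a b)
    have hRb : 0 < R b := (hR b).lt_of_ne' fun h0 ↦ htb.ne' (hRt b h0)
    rw [← mul_add, ← Real.log_mul hD.ne' (div_pos hRb htb).ne', ← mul_div_assoc]
    gcongr
    exact hpR a b
  have hsumlog : ∑ a, ∑ b, p a b * Real.log (R b / t b) = ∑ b, t b * Real.log (R b / t b) := by
    rw [Finset.sum_comm]
    simp_rw [ht, Finset.sum_mul]
  rw [condEntropy, neg_le_neg_iff]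
  calc ∑ a, ∑ b, p a b * Real.log (p a b / t b)
      ≤ ∑ a, ∑ b, (p a b * Real.log D + p a b * Real.log (R b / t b)) :=
        Finset.sum_le_sum fun a _ ↦ Finset.sum_le_sum fun b _ ↦ hterm a b
    _ = Real.log D + ∑ b, t b * Real.log (R b / t b) := by
        simp_rw [Finset.sum_add_distrib, hsumlog, ← Finset.sum_mul, hsum, one_mul]
    _ ≤ Real.log D := by
        linarith [gibbs_inequality ht0 hR hRt (hRsum.trans htsum.ge)]

lemma sum_prod_apply_le_one [Fintype γ] [Fintype ι] {f : ι → α → γ}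
    (hf : Function.Injective fun a i ↦ f i a) {g : ι → γ → ℝ} (hg : ∀ i c, 0 ≤ g i c)
    (hg1 : ∀ i, ∑ c, g i c ≤ 1) :
    ∑ a, ∏ i, g i (f i a) ≤ 1 := by
  classical
  calc ∑ a, ∏ i, g i (f i a)
      = ∑ φ ∈ Finset.univ.map ⟨_, hf⟩, ∏ i, g i (φ i) := by rw [Finset.sum_map]; rfl
    _ ≤ ∑ φ : ι → γ, ∏ i, g i (φ i) :=
        Finset.sum_le_sum_of_subset_of_nonneg (Finset.subset_univ _)
          fun φ _ _ ↦ Finset.prod_nonneg fun i _ ↦ hg i _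
    _ = ∏ i, ∑ c, g i c := (Fintype.prod_sum _).symm
    _ ≤ 1 := Finset.prod_le_one (fun i _ ↦ Finset.sum_nonneg fun c _ ↦ hg i c) fun i _ ↦ hg1 i

section Pushforward

variable [DecidableEq γ]

omit [Fintype β] in
lemma le_pushforwardFst {p : α → β → ℝ} (hp : ∀ a b, 0 ≤ p a b) (f : α → γ) (a : α) (b : β) :
    p a b ≤ pushforwardFst f p (f a) b :=
  Finset.single_le_sum (f := fun a' ↦ p a' b) (fun a' _ ↦ hp a' b) (by simp)

omit [Fintype β] in
lemma pushforwardFst_nonneg {p : α → β → ℝ} (hp : ∀ a b, 0 ≤ p a b) (f : α → γ) (c : γ) (b : β) :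
    0 ≤ pushforwardFst f p c b :=
  Finset.sum_nonneg fun a _ ↦ hp a b

variable [Fintype γ]

omit [Fintype β] in
lemma sum_pushforwardFst_mul (f : α → γ) (p : α → β → ℝ) (b : β) (g : γ → ℝ) :
    ∑ c, pushforwardFst f p c b * g c = ∑ a, p a b * g (f a) := by
  simp_rw [pushforwardFst, Finset.sum_mul]
  rw [← Finset.sum_fiberwise _ f fun a ↦ p a b * g (f a)]
  refine Finset.sum_congr rfl fun c _ ↦ Finset.sum_congr rfl fun a ha ↦ ?_
  rw [(Finset.mem_filter.1 ha).2]

omit [Fintype β] in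
lemma sum_pushforwardFst (f : α → γ) (p : α → β → ℝ) (b : β) :
    ∑ c, pushforwardFst f p c b = ∑ a, p a b := by
  simpa using sum_pushforwardFst_mul f p b 1

lemma condEntropy_pushforwardFst (f : α → γ) (p : α → β → ℝ) :
    condEntropy (pushforwardFst f p) =
      -∑ b, ∑ a, p a b * Real.log (pushforwardFst f p (f a) b / ∑ a', p a' b) := by
  rw [condEntropy, Finset.sum_comm]
  simp_rw [sum_pushforwardFst]
  exact congrArg Neg.neg <| Finset.sum_congr rfl fun b _ ↦ sum_pushforwardFst_mul f p b _

omit [Fintype β] [Fintype γ] in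
/-- Gibbs' inequality against the product of the conditional marginals. -/
lemma sum_mul_log_pushforwardFst_le [Finite γ] [Fintype ι] {p : α → β → ℝ} (hp : ∀ a b, 0 ≤ p a b)
    {f : ι → α → γ} (hf : Function.Injective fun a i ↦ f i a) (b : β) :
    ∑ i, ∑ a, p a b * Real.log (pushforwardFst (f i) p (f i a) b / ∑ a', p a' b) ≤
      ∑ a, p a b * Real.log (p a b / ∑ a', p a' b) := by
  cases nonempty_fintype γ
  set t := ∑ a, p a b
  have hpt (a : α) : p a b ≤ t := le_sum_of_nonneg hp a b
  have ht0 : 0 ≤ t := Finset.sum_nonneg fun a _ ↦ hp a b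
  set g : ι → γ → ℝ := fun i c ↦ pushforwardFst (f i) p c b / t with hg
  have hg0 (i : ι) (c : γ) : 0 ≤ g i c := div_nonneg (pushforwardFst_nonneg hp _ _ _) ht0
  have hg1 (i : ι) : ∑ c, g i c ≤ 1 := by
    rw [hg, ← Finset.sum_div, sum_pushforwardFst]
    exact div_self_le_one _
  have hgpos {a : α} (h : 0 < p a b) (i : ι) : 0 < g i (f i a) :=
    div_pos (h.trans_le (le_pushforwardFst hp _ _ _)) (h.trans_le (hpt a))
  set q : α → ℝ := fun a ↦ t * ∏ i, g i (f i a) with hq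
  have hq0 (a : α) : 0 ≤ q a := mul_nonneg ht0 (Finset.prod_nonneg fun i _ ↦ hg0 i _)
  have hqpos {a : α} (h : 0 < p a b) : 0 < q a :=
    mul_pos (h.trans_le (hpt a)) (Finset.prod_pos fun i _ ↦ hgpos h i)
  have hgibbs : ∑ a, p a b * Real.log (q a / p a b) ≤ 0 := by
    refine gibbs_inequality (fun a ↦ hp a b) hq0
      (fun a h ↦ by_contra fun h' ↦ (hqpos ((hp a b).lt_of_ne' h')).ne' h) ?_
    rw [hq, ← Finset.mul_sum]
    exact mul_le_of_le_one_right ht0 (sum_prod_apply_le_one hf hg0 hg1)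
  have hterm (a : α) : p a b * Real.log (q a / p a b) =
      ∑ i, p a b * Real.log (g i (f i a)) - p a b * Real.log (p a b / t) := by
    rcases (hp a b).eq_or_lt with h | h
    · simp [← h]
    have ht := h.trans_le (hpt a)
    rw [← Finset.mul_sum, ← Real.log_prod fun i _ ↦ (hgpos h i).ne', ← mul_sub,
      ← Real.log_div (Finset.prod_pos fun i _ ↦ hgpos h i).ne' (div_pos h ht).ne']
    congr 2
    simp only [hq]
    field_simp
  simp_rw [hterm, Finset.sum_sub_distrib] at hgibbs
  rw [Finset.sum_comm]
  exact sub_nonpos.1 hgibbs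

theorem condEntropy_le_sum_condEntropy_pushforwardFst [Fintype ι] {p : α → β → ℝ}
    (hp : ∀ a b, 0 ≤ p a b) {f : ι → α → γ} (hf : Function.Injective fun a i ↦ f i a) :
    condEntropy p ≤ ∑ i, condEntropy (pushforwardFst (f i) p) := by
  simp_rw [condEntropy_pushforwardFst, Finset.sum_neg_distrib]
  rw [condEntropy, neg_le_neg_iff, Finset.sum_comm, Finset.sum_comm (s := Finset.univ (α := α))]
  exact Finset.sum_le_sum fun b _ ↦ sum_mul_log_pushforwardFst_le hp hf b

end Pushforward

end ConditionalEntropy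

section GammaBounds

open Polynomial

lemma log_factorial_le (N : ℕ) :
    Real.log N.factorial ≤ N * Real.log N - N + Real.log (N + 1) / 2 + 1 := by
  rcases N with - | k
  · simp
  have hanti := Stirling.log_stirlingSeq'_antitone (Nat.zero_le k)
  simp only [Function.comp_apply, Stirling.log_stirlingSeq_formula, Nat.succ_eq_add_one,
    zero_add, Nat.factorial_one] at hanti
  have hk : (0 : ℝ) < (k + 1 : ℕ) := by positivity
  have hlog : Real.log (k + 1 : ℕ) ≤ Real.log ((k + 1 : ℕ) + 1) := Real.log_le_log hk (by simp)
  rw [Real.log_mul two_ne_zero hk.ne', Real.log_div hk.ne' (Real.exp_ne_zero 1),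
    Real.log_exp] at hanti
  simp only [Nat.cast_one, mul_one, Real.log_one, one_div, Real.log_inv, Real.log_exp] at hanti
  linarith

/-- Hermite–Hadamard for the concave function `log` on `[a, a + 1]`. -/
lemma mul_log_add_one_sub_le_log_add_half {a : ℝ} (ha : 0 ≤ a) :
    (a + 1) * Real.log (a + 1) - a * Real.log a - 1 ≤ Real.log (a + 1 / 2) := by
  have hc : 0 < a + 1 / 2 := by positivity
  have htangent : ∀ x ∈ Set.Ioo a (a + 1),
      Real.log x ≤ Real.log (a + 1 / 2) + (x - (a + 1 / 2)) / (a + 1 / 2) := by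
    intro x hx
    have hx0 : 0 < x := ha.trans_lt hx.1
    have := Real.log_le_sub_one_of_pos (div_pos hx0 hc)
    rw [Real.log_div hx0.ne' hc.ne'] at this
    rw [sub_div, div_self hc.ne']
    linarith
  have hmono := intervalIntegral.integral_mono_on_of_le_Ioo (by linarith)
    intervalIntegral.intervalIntegrable_log'
    (Continuous.intervalIntegrable (by fun_prop) _ _) htangent
  have hlinear : ∫ x in a..(a + 1), (Real.log (a + 1 / 2) + (x - (a + 1 / 2)) / (a + 1 / 2)) =
      Real.log (a + 1 / 2) := by
    rw [intervalIntegral.integral_add (by simp) (Continuous.intervalIntegrable (by fun_prop) _ _),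
      intervalIntegral.integral_div, intervalIntegral.integral_sub (by simp) (by simp)]
    simp only [integral_id, intervalIntegral.integral_const, smul_eq_mul]
    field_simp
    ring
  rw [hlinear, integral_log] at hmono
  linarith

lemma mul_log_sub_le_log_ascPochhammer_half (N : ℕ) :
    N * Real.log N - N ≤ Real.log ((ascPochhammer ℝ N).eval (1 / 2)) := by
  induction N with
  | zero => simp
  | succ k ih =>
    rw [ascPochhammer_succ_eval, Real.log_mul (ascPochhammer_pos k _ (by norm_num)).ne'
      (by positivity), add_comm (1 / 2 : ℝ)]
    have := mul_log_add_one_sub_le_log_add_half k.cast_nonneg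
    push_cast
    linarith

lemma log_ascPochhammer_sub_log_factorial_le {a : ℝ} (ha : 0 < a) (N : ℕ) :
    Real.log ((ascPochhammer ℝ N).eval a) - Real.log N.factorial ≤
      (a - 1) * (harmonic N : ℝ) := by
  induction N with
  | zero => simp
  | succ k ih =>
    have hk : (0 : ℝ) < k + 1 := by positivity
    have hak : 0 < a + k := by positivity
    have hratio := Real.log_le_sub_one_of_pos (div_pos hak hk)
    rw [Real.log_div hak.ne' hk.ne', show (a + k) / (k + 1) - 1 = (a - 1) * (k + 1 : ℝ)⁻¹ by
      field_simp; ring] at hratio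
    rw [ascPochhammer_succ_eval, Nat.factorial_succ, harmonic_succ,
      Real.log_mul (ascPochhammer_pos k a ha).ne' hak.ne']
    push_cast
    rw [Real.log_mul hk.ne' (by positivity)]
    linarith

lemma log_ascPochhammer_le {a : ℝ} (ha : 0 < a) (N : ℕ) :
    Real.log ((ascPochhammer ℝ N).eval a) ≤
      N * Real.log N - N + (a - 1 / 2) * Real.log (N + 1) + a + 1 := by
  have hlower : Real.log (N + 1) ≤ harmonic N := mod_cast log_add_one_le_harmonic N
  have hupper : (harmonic N : ℝ) ≤ 1 + Real.log (N + 1) := by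
    rcases N.eq_zero_or_pos with rfl | hN
    · simp
    refine (harmonic_le_one_add_log N).trans ?_
    gcongr
    simp
  have hharm : (a - 1) * (harmonic N : ℝ) ≤ (a - 1) * Real.log (N + 1) + a := by
    nlinarith
  linarith [log_ascPochhammer_sub_log_factorial_le ha N, log_factorial_le N]

end GammaBounds

section PolyaMass

open Polynomial

variable {α : Type*} [Fintype α]

/-- Probability that a Pólya urn with initial weights `a` produces a given sequence of colours in
which each colour `j` occurs `N j` times; equivalently, the mixture of `∏ j, θ j ^ N j` over
`θ ∼ Dirichlet(a)`. A colour of weight `0` never occurs. -/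
noncomputable def polyaMass (a : α → ℝ) (N : α → ℕ) : ℝ :=
  (∏ j, (ascPochhammer ℝ (N j)).eval (a j)) / (ascPochhammer ℝ (∑ j, N j)).eval (∑ j, a j)

lemma ascPochhammer_eval_nonneg {a : ℝ} (ha : 0 ≤ a) (N : ℕ) : 0 ≤ (ascPochhammer ℝ N).eval a := by
  induction N with
  | zero => simp
  | succ k ih => rw [ascPochhammer_succ_eval]; positivity

lemma polyaMass_nonneg {a : α → ℝ} (ha : ∀ j, 0 ≤ a j) (N : α → ℕ) : 0 ≤ polyaMass a N :=
  div_nonneg (Finset.prod_nonneg fun j _ ↦ ascPochhammer_eval_nonneg (ha j) _)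
    (ascPochhammer_eval_nonneg (Finset.sum_nonneg fun j _ ↦ ha j) _)

@[simp]
lemma polyaMass_zero (a : α → ℝ) : polyaMass a 0 = 1 := by
  simp [polyaMass]

lemma polyaMass_add_single [DecidableEq α] (a : α → ℝ) (N : α → ℕ) (b : α) :
    polyaMass a (N + Pi.single b 1) =
      polyaMass a N * ((a b + N b) / (∑ j, a j + ∑ j, (N j : ℝ))) := by
  have hsum : ∑ j, (N + Pi.single b 1 : α → ℕ) j = ∑ j, N j + 1 := by
    simp [Finset.sum_add_distrib]
  have hprod : ∏ j, (ascPochhammer ℝ ((N + Pi.single b 1 : α → ℕ) j)).eval (a j) =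
      (∏ j, (ascPochhammer ℝ (N j)).eval (a j)) * (a b + N b) := by
    have hfactor (j : α) : (ascPochhammer ℝ ((N + Pi.single b 1 : α → ℕ) j)).eval (a j) =
        (ascPochhammer ℝ (N j)).eval (a j) * if j = b then a j + N j else 1 := by
      by_cases h : j = b
      · subst h
        simp [ascPochhammer_succ_eval]
      · simp [h]
    simp_rw [hfactor, Finset.prod_mul_distrib]
    simp
  rw [polyaMass, hsum, hprod, ascPochhammer_succ_eval, polyaMass, mul_div_mul_comm]
  push_cast
  rfl

lemma sum_polyaMass_add_single_le [DecidableEq α] {a : α → ℝ} (ha : ∀ j, 0 ≤ a j) (N : α → ℕ) :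
    ∑ b, polyaMass a (N + Pi.single b 1) ≤ polyaMass a N := by
  simp_rw [polyaMass_add_single, ← Finset.mul_sum, ← Finset.sum_div, Finset.sum_add_distrib]
  exact mul_le_of_le_one_right (polyaMass_nonneg ha N) (div_self_le_one _)

variable [DecidableEq α]

/-- The parameters of Jeffreys' prior, the Dirichlet distribution with all weights `1 / 2`, on the
probability vectors supported in `S`. -/
noncomputable def jeffreysWeight (S : Finset α) (j : α) : ℝ := if j ∈ S then 1 / 2 else 0

omit [Fintype α] in
lemma jeffreysWeight_of_mem {S : Finset α} {j : α} (hj : j ∈ S) : jeffreysWeight S j = 1 / 2 :=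
  if_pos hj

omit [Fintype α] in
lemma jeffreysWeight_nonneg (S : Finset α) (j : α) : 0 ≤ jeffreysWeight S j := by
  unfold jeffreysWeight
  positivity

lemma sum_jeffreysWeight (S : Finset α) : ∑ j, jeffreysWeight S j = S.card / 2 := by
  simp [jeffreysWeight, div_eq_mul_inv]

omit [DecidableEq α] in
lemma sum_mul_log_le_sum_mul_log_sub {N θ : α → ℝ} (hN : ∀ j, 0 ≤ N j) (hθ : ∀ j, 0 ≤ θ j)
    (hsum : ∑ j, θ j ≤ 1) (hNθ : ∀ j, θ j = 0 → N j = 0) :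
    ∑ j, N j * Real.log (θ j) ≤
      ∑ j, N j * Real.log (N j) - (∑ j, N j) * Real.log (∑ j, N j) := by
  set n := ∑ j, N j with hn
  have hle (j : α) : N j ≤ n := Finset.single_le_sum (fun j _ ↦ hN j) (Finset.mem_univ j)
  have hn0 : 0 ≤ n := Finset.sum_nonneg fun j _ ↦ hN j
  have hgibbs := gibbs_inequality hN (fun j ↦ mul_nonneg hn0 (hθ j))
    (fun j h ↦ (mul_eq_zero.1 h).elim (fun h ↦ le_antisymm (h ▸ hle j) (hN j)) (hNθ j))
    (by rw [← Finset.mul_sum]; exact mul_le_of_le_one_right hn0 hsum)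
  have hterm (j : α) : N j * Real.log (n * θ j / N j) =
      N j * Real.log (θ j) - (N j * Real.log (N j) - N j * Real.log n) := by
    rcases (hN j).eq_or_lt with h | h
    · simp [← h]
    have hθj : θ j ≠ 0 := fun h0 ↦ h.ne' (hNθ j h0)
    have hnj : n ≠ 0 := (h.trans_le (hle j)).ne'
    rw [Real.log_div (mul_ne_zero hnj hθj) h.ne', Real.log_mul hnj hθj]
    ring
  simp_rw [hterm, Finset.sum_sub_distrib, ← Finset.sum_mul, ← hn] at hgibbs
  exact sub_nonpos.1 hgibbs

lemma log_polyaMass_jeffreysWeight_ge {S : Finset α} (hS : S.Nonempty) {N : α → ℕ}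
    (hN : ∀ j, j ∈ S ∨ N j = 0) :
    0 < polyaMass (jeffreysWeight S) N ∧
      ∑ j, N j * Real.log (N j) - (∑ j, (N j : ℝ)) * Real.log (∑ j, (N j : ℝ)) -
          (((S.card : ℝ) - 1) / 2 * Real.log (∑ j, (N j : ℝ) + 1) + (S.card / 2 + 1)) ≤
        Real.log (polyaMass (jeffreysWeight S) N) := by
  have hcard : (0 : ℝ) < S.card / 2 := by
    have := hS.card_pos
    positivity
  have hfactor (j : α) : 0 < (ascPochhammer ℝ (N j)).eval (jeffreysWeight S j) ∧
      N j * Real.log (N j) - N j ≤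
        Real.log ((ascPochhammer ℝ (N j)).eval (jeffreysWeight S j)) := by
    rcases hN j with hj | hj
    · rw [jeffreysWeight_of_mem hj]
      exact ⟨ascPochhammer_pos _ _ (by norm_num), mul_log_sub_le_log_ascPochhammer_half _⟩
    · simp [hj]
  have hnum := Finset.sum_le_sum fun j (_ : j ∈ Finset.univ) ↦ (hfactor j).2
  have hden := log_ascPochhammer_le hcard (∑ j, N j)
  have hnumpos := Finset.prod_pos fun j (_ : j ∈ Finset.univ) ↦ (hfactor j).1
  have hdenpos := ascPochhammer_pos (∑ j, N j) _ hcard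
  rw [polyaMass, sum_jeffreysWeight]
  refine ⟨div_pos hnumpos hdenpos, ?_⟩
  rw [Real.log_div hnumpos.ne' hdenpos.ne', Real.log_prod fun j _ ↦ (hfactor j).1.ne']
  push_cast at hden
  rw [Finset.sum_sub_distrib] at hnum
  linarith

/-- The Krichevsky–Trofimov bound: the Jeffreys mixture is a universal code for memoryless sources,
at a cost of half the logarithm of the sample size per free parameter. -/
theorem prod_pow_le_mul_polyaMass_jeffreysWeight {S : Finset α} {θ : α → ℝ} (hθ : ∀ j, 0 ≤ θ j)
    (hsum : ∑ j, θ j = 1) (hS : ∀ j, θ j ≠ 0 → j ∈ S) (N : α → ℕ) :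
    ∏ j, θ j ^ N j ≤ Real.exp (S.card / 2 + 1) * (∑ j, (N j : ℝ) + 1) ^ (((S.card : ℝ) - 1) / 2) *
      polyaMass (jeffreysWeight S) N := by
  have hn1 : 0 < ∑ j, (N j : ℝ) + 1 := by positivity
  by_cases hzero : ∃ j, θ j ^ N j = 0
  · obtain ⟨j, hj⟩ := hzero
    rw [Finset.prod_eq_zero (Finset.mem_univ j) hj]
    have := polyaMass_nonneg (jeffreysWeight_nonneg S) N
    positivity
  push Not at hzero
  have hNθ (j : α) (hj : θ j = 0) : N j = 0 :=
    by_contra fun hNj ↦ hzero j (by rw [hj, zero_pow hNj])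
  have hSne : S.Nonempty :=
    let ⟨j, _, hj⟩ := Finset.exists_ne_zero_of_sum_ne_zero (hsum.trans_ne one_ne_zero)
    ⟨j, hS j hj⟩
  obtain ⟨hpos, hlog⟩ := log_polyaMass_jeffreysWeight_ge hSne
    fun j ↦ (em (θ j = 0)).symm.imp (hS j) (hNθ j)
  have hgibbs := sum_mul_log_le_sum_mul_log_sub (fun j ↦ (N j).cast_nonneg) hθ hsum.le
    fun j hj ↦ Nat.cast_eq_zero.2 (hNθ j hj)
  refine (Real.log_le_log_iff
    (Finset.prod_pos fun j _ ↦ (pow_nonneg (hθ j) _).lt_of_ne' (hzero j)) (by positivity)).1 ?_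
  rw [Real.log_prod fun j _ ↦ hzero j, Real.log_mul (by positivity) hpos.ne',
    Real.log_mul (by positivity) (by positivity), Real.log_exp, Real.log_rpow hn1]
  simp_rw [Real.log_pow]
  linarith

end PolyaMass

section Paths

variable {α : Type*} [Fintype α] {m : ℕ}

lemma sum_snoc (F : (Fin (m + 1) → α) → ℝ) :
    ∑ x, F x = ∑ x : Fin m → α, ∑ b, F (Fin.snoc (α := fun _ ↦ α) x b) := by
  rw [← (Fin.snocEquiv fun _ ↦ α).sum_comp, Fintype.sum_prod_type_right]
  rfl

/-- The transition matrix `M` and the initial distribution `π0` define a Markov chain on `α` whose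
positive transition probabilities all lie on edges in `E`. -/
structure IsMarkovChainOn (E : Finset (α × α)) (M : Matrix α α ℝ) (π0 : α → ℝ) : Prop where
  nonneg (i j : α) : 0 ≤ M i j
  sum_eq_one (i : α) : ∑ j, M i j = 1
  mem_of_ne_zero (i j : α) : M i j ≠ 0 → (i, j) ∈ E
  init_nonneg (i : α) : 0 ≤ π0 i
  sum_init : ∑ i, π0 i = 1

/-- Probability of the path `x`, which visits `m + 1` states, for the Markov chain with transition
matrix `M` and initial distribution `π0`. -/
def pathProb (M : Matrix α α ℝ) (π0 : α → ℝ) (x : Fin (m + 1) → α) : ℝ :=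
  π0 (x 0) * ∏ k : Fin m, M (x k.castSucc) (x k.succ)

omit [Fintype α] in
lemma pathProb_snoc (M : Matrix α α ℝ) (π0 : α → ℝ) (x : Fin (m + 1) → α) (b : α) :
    pathProb M π0 (Fin.snoc (α := fun _ ↦ α) x b) = pathProb M π0 x * M (x (Fin.last m)) b := by
  simp [pathProb, Fin.prod_univ_castSucc, ← Fin.castSucc_zero, -Fin.castSucc_zero', mul_assoc,
    Fin.succ_castSucc, -Fin.castSucc_succ]

variable {E : Finset (α × α)} {M : Matrix α α ℝ} {π0 : α → ℝ}

lemma IsMarkovChainOn.pathProb_nonneg (h : IsMarkovChainOn E M π0) (x : Fin (m + 1) → α) :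
    0 ≤ pathProb M π0 x :=
  mul_nonneg (h.init_nonneg _) (Finset.prod_nonneg fun _ _ ↦ h.nonneg _ _)

lemma IsMarkovChainOn.sum_pathProb (h : IsMarkovChainOn E M π0) :
    ∑ x : Fin (m + 1) → α, pathProb M π0 x = 1 := by
  induction m with
  | zero =>
    rw [← h.sum_init, ← (Equiv.funUnique (Fin 1) α).sum_comp]
    simp [pathProb]
  | succ m ih =>
    rw [sum_snoc]
    simp_rw [pathProb_snoc, ← Finset.mul_sum, h.sum_eq_one, mul_one, ih]

variable [DecidableEq α]

/-- Number of transitions from `i` to `j` along the path `x`. -/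
def transitionCount (x : Fin (m + 1) → α) (i j : α) : ℕ :=
  Finset.card {k : Fin m | x k.castSucc = i ∧ x k.succ = j}

omit [Fintype α] in
lemma transitionCount_snoc (x : Fin (m + 1) → α) (b i : α) :
    transitionCount (Fin.snoc (α := fun _ ↦ α) x b) i =
      transitionCount x i + if x (Fin.last m) = i then Pi.single b 1 else 0 := by
  ext j
  simp only [transitionCount, Finset.card_filter, Fin.sum_univ_castSucc, Fin.succ_castSucc,
    Fin.snoc_castSucc, Fin.succ_last, Fin.snoc_last, Pi.add_apply, add_right_inj]
  split_ifs <;> simp_all [eq_comm]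

lemma sum_transitionCount_le (x : Fin (m + 1) → α) (i : α) : ∑ j, transitionCount x i j ≤ m :=
  calc ∑ j, transitionCount x i j = Finset.card {k : Fin m | x k.castSucc = i} := by
        rw [Finset.card_eq_sum_card_fiberwise (f := fun k ↦ x k.succ) (t := Finset.univ) (by simp)]
        simp_rw [Finset.filter_filter, transitionCount]
    _ ≤ m := (Finset.card_le_univ _).trans_eq (Fintype.card_fin m)

lemma prod_transition_eq_prod_pow (M : α → α → ℝ) (x : Fin (m + 1) → α) :
    ∏ k : Fin m, M (x k.castSucc) (x k.succ) = ∏ i, ∏ j, M i j ^ transitionCount x i j :=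
  calc ∏ k : Fin m, M (x k.castSucc) (x k.succ)
      = ∏ ij : α × α, ∏ k : Fin m with (x k.castSucc, x k.succ) = ij, M ij.1 ij.2 :=
        (Finset.prod_fiberwise' _ (fun k : Fin m ↦ (x k.castSucc, x k.succ))
          fun ij : α × α ↦ M ij.1 ij.2).symm
    _ = ∏ i, ∏ j, M i j ^ transitionCount x i j := by
        simp_rw [Fintype.prod_prod_type, Finset.prod_const, Prod.mk.injEq, transitionCount]

/-- Set of successors of the state `i` in the graph with edge set `E`. -/
def successors (E : Finset (α × α)) (i : α) : Finset α := {j | (i, j) ∈ E}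

lemma mem_successors {E : Finset (α × α)} {i j : α} : j ∈ successors E i ↔ (i, j) ∈ E := by
  simp [successors]

lemma sum_card_successors (E : Finset (α × α)) : ∑ i, (successors E i).card = E.card := by
  simp_rw [successors, Finset.card_filter]
  rw [← Fintype.sum_prod_type' fun i j ↦ if (i, j) ∈ E then 1 else 0]
  simp

/-- The Krichevsky–Trofimov mixture: mass of the path `x` when the initial state is uniform and the
rows of the transition matrix are independent with Jeffreys' prior on the successors allowed by
`E`. -/
noncomputable def jeffreysPathMass (E : Finset (α × α)) (x : Fin (m + 1) → α) : ℝ :=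
  (Fintype.card α : ℝ)⁻¹ *
    ∏ i, polyaMass (jeffreysWeight (successors E i)) (transitionCount x i)

lemma jeffreysPathMass_nonneg (E : Finset (α × α)) (x : Fin (m + 1) → α) :
    0 ≤ jeffreysPathMass E x :=
  mul_nonneg (by positivity)
    (Finset.prod_nonneg fun _ _ ↦ polyaMass_nonneg (jeffreysWeight_nonneg _) _)

lemma sum_jeffreysPathMass_snoc_le (E : Finset (α × α)) (x : Fin (m + 1) → α) :
    ∑ b, jeffreysPathMass E (Fin.snoc (α := fun _ ↦ α) x b) ≤ jeffreysPathMass E x := by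
  set i₀ := x (Fin.last m)
  have hsplit (b : α) : ∏ i, polyaMass (jeffreysWeight (successors E i))
        (transitionCount (Fin.snoc (α := fun _ ↦ α) x b) i) =
      polyaMass (jeffreysWeight (successors E i₀)) (transitionCount x i₀ + Pi.single b 1) *
        ∏ i ∈ Finset.univ.erase i₀,
          polyaMass (jeffreysWeight (successors E i)) (transitionCount x i) := by
    rw [← Finset.mul_prod_erase _ _ (Finset.mem_univ i₀)]
    congr! 1
    · rw [transitionCount_snoc, if_pos rfl]
    · refine Finset.prod_congr rfl fun i hi ↦ ?_
      rw [transitionCount_snoc, if_neg (Finset.ne_of_mem_erase hi).symm, add_zero]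
  simp_rw [jeffreysPathMass, ← Finset.mul_sum, hsplit, ← Finset.sum_mul]
  rw [← Finset.mul_prod_erase _ _ (Finset.mem_univ i₀)]
  gcongr
  · exact Finset.prod_nonneg fun _ _ ↦ polyaMass_nonneg (jeffreysWeight_nonneg _) _
  · exact sum_polyaMass_add_single_le (jeffreysWeight_nonneg _) _

lemma sum_jeffreysPathMass_le_one (E : Finset (α × α)) :
    ∑ x : Fin (m + 1) → α, jeffreysPathMass E x ≤ 1 := by
  induction m with
  | zero =>
    have hcount (x : Fin 1 → α) (i : α) : transitionCount x i = 0 := by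
      ext j
      simp [transitionCount]
    simp [jeffreysPathMass, hcount, mul_inv_le_one]
  | succ m ih =>
    rw [sum_snoc]
    exact (Finset.sum_le_sum fun x _ ↦ sum_jeffreysPathMass_snoc_le E x).trans ih

/-- Factor by which the probability of a path of length `s` under an arbitrary Markov chain on `E`
can exceed its mass under a universal mixture; its logarithm is `(|E| - r) / 2 * log s + O(1)`. -/
noncomputable def pathRedundancy (E : Finset (α × α)) (s : ℕ) : ℝ :=
  Fintype.card α * (Real.exp (E.card / 2 + Fintype.card α) *
    (s + 1 : ℝ) ^ (((E.card : ℝ) - Fintype.card α) / 2))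

namespace IsMarkovChainOn

lemma one_le_card_successors (h : IsMarkovChainOn E M π0) (i : α) :
    1 ≤ (successors E i).card := by
  obtain ⟨j, -, hj⟩ := Finset.exists_ne_zero_of_sum_ne_zero ((h.sum_eq_one i).trans_ne one_ne_zero)
  exact Finset.card_pos.2 ⟨j, mem_successors.2 (h.mem_of_ne_zero i j hj)⟩

lemma pathProb_le (h : IsMarkovChainOn E M π0) (x : Fin (m + 1) → α) :
    pathProb M π0 x ≤ pathRedundancy E m * jeffreysPathMass E x := by
  have hrow (i : α) : ∏ j, M i j ^ transitionCount x i j ≤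
      Real.exp ((successors E i).card / 2 + 1) *
        (m + 1 : ℝ) ^ ((((successors E i).card : ℝ) - 1) / 2) *
          polyaMass (jeffreysWeight (successors E i)) (transitionCount x i) := by
    refine (prod_pow_le_mul_polyaMass_jeffreysWeight (h.nonneg i) (h.sum_eq_one i)
      (fun j hj ↦ mem_successors.2 (h.mem_of_ne_zero i j hj)) _).trans ?_
    have hcount : (∑ j, (transitionCount x i j : ℝ)) ≤ m := mod_cast sum_transitionCount_le x i
    have hdeg : (1 : ℝ) ≤ (successors E i).card := mod_cast h.one_le_card_successors i
    gcongr
    · exact polyaMass_nonneg (jeffreysWeight_nonneg _) _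
  have hcard : ∑ i, ((successors E i).card : ℝ) = E.card := mod_cast sum_card_successors E
  have hr : (Fintype.card α : ℝ) ≠ 0 := by
    have := Fintype.card_pos_iff.2 ⟨x 0⟩
    positivity
  have hinit : π0 (x 0) ≤ 1 :=
    h.sum_init ▸ Finset.single_le_sum (fun i _ ↦ h.init_nonneg i) (Finset.mem_univ (x 0))
  calc pathProb M π0 x ≤ ∏ k : Fin m, M (x k.castSucc) (x k.succ) :=
        mul_le_of_le_one_left (Finset.prod_nonneg fun _ _ ↦ h.nonneg _ _) hinit
    _ = ∏ i, ∏ j, M i j ^ transitionCount x i j := prod_transition_eq_prod_pow M x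
    _ ≤ ∏ i, (Real.exp ((successors E i).card / 2 + 1) *
          (m + 1 : ℝ) ^ ((((successors E i).card : ℝ) - 1) / 2) *
            polyaMass (jeffreysWeight (successors E i)) (transitionCount x i)) :=
        Finset.prod_le_prod
          (fun i _ ↦ Finset.prod_nonneg fun j _ ↦ pow_nonneg (h.nonneg i j) _) fun i _ ↦ hrow i
    _ = _ := by
        rw [Finset.prod_mul_distrib, Finset.prod_mul_distrib, ← Real.exp_sum,
          ← Real.rpow_sum_of_pos (by positivity), ← Finset.sum_div, Finset.sum_add_distrib,
          Finset.sum_sub_distrib, ← Finset.sum_div, hcard, pathRedundancy, jeffreysPathMass]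
        simp only [Finset.sum_const, Finset.card_univ, nsmul_eq_mul, mul_one]
        field_simp

omit [DecidableEq α] in
lemma card_le_card_edges (h : IsMarkovChainOn E M π0) : Fintype.card α ≤ E.card := by
  classical
  rw [← sum_card_successors, ← Finset.card_univ, Finset.card_eq_sum_ones]
  exact Finset.sum_le_sum fun i _ ↦ h.one_le_card_successors i

omit [DecidableEq α] in
lemma card_pos (h : IsMarkovChainOn E M π0) : 0 < Fintype.card α :=
  have ⟨i, _⟩ := Finset.exists_ne_zero_of_sum_ne_zero (h.sum_init.trans_ne one_ne_zero)
  Fintype.card_pos_iff.2 ⟨i⟩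

omit [DecidableEq α] in
lemma pathRedundancy_mono (h : IsMarkovChainOn E M π0) : Monotone (pathRedundancy E) := by
  intro s t hst
  have hcard : (Fintype.card α : ℝ) ≤ E.card := mod_cast h.card_le_card_edges
  unfold pathRedundancy
  gcongr

omit [DecidableEq α] in
lemma one_le_pathRedundancy (h : IsMarkovChainOn E M π0) (s : ℕ) : 1 ≤ pathRedundancy E s := by
  have hcard : (1 : ℝ) ≤ Fintype.card α := mod_cast h.card_pos
  calc (1 : ℝ) ≤ pathRedundancy E 0 := by
        simpa [pathRedundancy] using one_le_mul_of_one_le_of_one_le hcard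
          (Real.one_le_exp (by positivity : 0 ≤ (E.card : ℝ) / 2 + Fintype.card α))
    _ ≤ pathRedundancy E s := h.pathRedundancy_mono s.zero_le

end IsMarkovChainOn

end Paths

section PathLaw

variable {r : ℕ}

lemma pathLaw_singleton (M : Matrix (Fin r) (Fin r) ℝ) (π0 : Fin r → ℝ) (m : ℕ)
    (x : Fin m → Fin r) :
    pathLaw M π0 m {x} = ENNReal.ofReal (∏ k : Fin m, if (k : ℕ) = 0 then π0 (x k)
      else M (x ⟨(k : ℕ) - 1, lt_of_le_of_lt (Nat.sub_le _ _) k.isLt⟩) (x k)) := by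
  rw [pathLaw, Measure.finsetSum_apply, Finset.sum_eq_single x]
  · simp
  · intro y _ hy
    simp [hy]
  · simp

lemma pathLaw_succ_singleton (M : Matrix (Fin r) (Fin r) ℝ) (π0 : Fin r → ℝ) {m : ℕ}
    (x : Fin (m + 1) → Fin r) :
    pathLaw M π0 (m + 1) {x} = ENNReal.ofReal (pathProb M π0 x) := by
  rw [pathLaw_singleton, Fin.prod_univ_succ]
  rfl

instance (M : Matrix (Fin r) (Fin r) ℝ) (π0 : Fin r → ℝ) (m : ℕ) :
    IsFiniteMeasure (pathLaw M π0 m) := by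
  constructor
  rw [pathLaw, Measure.finsetSum_apply, ENNReal.sum_lt_top]
  simp

variable {E : Finset (Fin r × Fin r)} {M : Matrix (Fin r) (Fin r) ℝ} {π0 : Fin r → ℝ}

lemma IsMarkovChainOn.sum_pathLaw (h : IsMarkovChainOn E M π0) (m : ℕ) :
    ∑ x, pathLaw M π0 m {x} = 1 := by
  rcases m with - | m
  · simp [pathLaw_singleton]
  · simp_rw [pathLaw_succ_singleton]
    rw [← ENNReal.ofReal_sum_of_nonneg fun x _ ↦ h.pathProb_nonneg x, h.sum_pathProb,
      ENNReal.ofReal_one]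

theorem exists_mass_pathLaw_le (E : Finset (Fin r × Fin r)) (s : ℕ) :
    ∃ Q : (Fin s → Fin r) → ℝ≥0∞, ∑ x, Q x ≤ 1 ∧
      ∀ M π0, IsMarkovChainOn E M π0 → ∀ x,
        pathLaw M π0 s {x} ≤ ENNReal.ofReal (pathRedundancy E s) * Q x := by
  rcases s with - | m
  · refine ⟨1, by simp, fun M π0 h x ↦ ?_⟩
    simpa [pathLaw_singleton] using h.one_le_pathRedundancy 0
  refine ⟨fun x ↦ ENNReal.ofReal (jeffreysPathMass E x), ?_, fun M π0 h x ↦ ?_⟩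
  · rw [← ENNReal.ofReal_sum_of_nonneg fun x _ ↦ jeffreysPathMass_nonneg E x]
    exact ENNReal.ofReal_le_one.2 (sum_jeffreysPathMass_le_one E)
  · rw [pathLaw_succ_singleton,
      ← ENNReal.ofReal_mul (zero_le_one.trans (h.one_le_pathRedundancy _))]
    refine ENNReal.ofReal_le_ofReal ((h.pathProb_le x).trans ?_)
    gcongr
    · exact jeffreysPathMass_nonneg E x
    · exact h.pathRedundancy_mono m.le_succ

end PathLaw

section IIDMixture

variable {Θ A B ι : Type*} [MeasurableSpace Θ] [Fintype ι]

/-- Mass at `x` of the mixture over `p ∼ μ^ι` of the products of the mass functions `g (p u)`: the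
variables `x u` are independent given i.i.d. parameters `p u ∼ μ`. -/
noncomputable def iidMixture (μ : Measure Θ) (g : Θ → A → ℝ≥0∞) (x : ι → A) : ℝ≥0∞ :=
  ∫⁻ p, ∏ u, g (p u) (x u) ∂Measure.pi fun _ ↦ μ

lemma sum_lintegral_le {Ω κ : Type*} [MeasurableSpace Ω] (μ : Measure Ω) (s : Finset κ)
    (F : κ → Ω → ℝ≥0∞) : ∑ i ∈ s, ∫⁻ ω, F i ω ∂μ ≤ ∫⁻ ω, ∑ i ∈ s, F i ω ∂μ := by
  classical
  induction s using Finset.induction_on with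
  | empty => simp
  | insert a s ha ih =>
    simp_rw [Finset.sum_insert ha]
    exact (add_le_add_right ih _).trans (le_lintegral_add _ _)

lemma lintegral_pi_comp_perm (μ : Measure Θ) [SigmaFinite μ] (F : (ι → Θ) → ℝ≥0∞)
    (τ : Equiv.Perm ι) :
    ∫⁻ p, F (p ∘ τ) ∂Measure.pi (fun _ ↦ μ) = ∫⁻ p, F p ∂Measure.pi fun _ ↦ μ := by
  have hmp := measurePreserving_piCongrLeft (fun _ : ι ↦ μ) τ.symm
  rw [← hmp.lintegral_comp_emb (MeasurableEquiv.measurableEmbedding _) F]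
  refine lintegral_congr fun p ↦ congrArg F (funext fun u ↦ ?_)
  rw [MeasurableEquiv.coe_piCongrLeft]
  simpa using (Equiv.piCongrLeft_apply_apply (fun _ : ι ↦ Θ) τ.symm p (τ u)).symm

lemma iidMixture_comp_perm (μ : Measure Θ) [SigmaFinite μ] (g : Θ → A → ℝ≥0∞) (x : ι → A)
    (τ : Equiv.Perm ι) : iidMixture μ g (x ∘ τ) = iidMixture μ g x := by
  rw [iidMixture, ← lintegral_pi_comp_perm μ _ τ]
  exact lintegral_congr fun p ↦ Equiv.prod_comp τ fun u ↦ g (p u) (x u)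

variable (μ : Measure Θ) [IsProbabilityMeasure μ]

lemma ae_pi_of_ae {P : Θ → Prop} (hP : ∀ᵐ θ ∂μ, P θ) :
    ∀ᵐ p ∂Measure.pi fun _ : ι ↦ μ, ∀ u, P (p u) :=
  ae_all_iff.2 fun u ↦ (Measure.quasiMeasurePreserving_eval (fun _ : ι ↦ μ) u).ae hP

lemma sum_iidMixture_le_one [Fintype A] [DecidableEq ι] {g : Θ → A → ℝ≥0∞}
    (hg : ∀ᵐ θ ∂μ, ∑ a, g θ a ≤ 1) : ∑ x : ι → A, iidMixture μ g x ≤ 1 :=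
  calc ∑ x : ι → A, iidMixture μ g x
      ≤ ∫⁻ p, ∑ x : ι → A, ∏ u, g (p u) (x u) ∂Measure.pi fun _ ↦ μ := sum_lintegral_le _ _ _
    _ ≤ ∫⁻ _, 1 ∂Measure.pi fun _ : ι ↦ μ := by
        refine lintegral_mono_ae ?_
        filter_upwards [ae_pi_of_ae μ hg] with p hp
        rw [← Fintype.prod_sum]
        exact Finset.prod_le_one' fun u _ ↦ hp u
    _ = 1 := by simp

lemma iidMixture_le_prod_mul {G : Θ → A → ℝ≥0∞} {c : A → ℝ≥0∞} {h : Θ → B → ℝ≥0∞} {ψ : A → B}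
    (hc : ∀ a, c a ≠ ∞) (hG : ∀ᵐ θ ∂μ, ∀ a, G θ a ≤ c a * h θ (ψ a)) (x : ι → A) :
    iidMixture μ G x ≤ (∏ u, c (x u)) * iidMixture μ h (ψ ∘ x) := by
  rw [iidMixture, iidMixture, ← lintegral_const_mul' _ _ (ENNReal.prod_ne_top fun u _ ↦ hc _)]
  refine lintegral_mono_ae ?_
  filter_upwards [ae_pi_of_ae μ hG] with p hp
  rw [← Finset.prod_mul_distrib]
  exact Finset.prod_le_prod' fun u _ ↦ hp u (x u)

end IIDMixture

section Redundancy

variable {Θ A B ι : Type*} [MeasurableSpace Θ] [Fintype A] [Fintype B] [Fintype ι]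
  {μ : Measure Θ} {g : Θ → A → ℝ≥0∞} {h : Θ → B → ℝ≥0∞} {K : ℝ≥0∞}

/-- Up to the factor `K`, almost every member of the family `g` of mass functions is bounded by one
and the same sub-probability mass function: the family has a universal code of redundancy
`log K`. -/
def HasRedundancyLE (μ : Measure Θ) (g : Θ → A → ℝ≥0∞) (K : ℝ≥0∞) : Prop :=
  ∃ Q : A → ℝ≥0∞, ∑ a, Q a ≤ 1 ∧ ∀ᵐ θ ∂μ, ∀ a, g θ a ≤ K * Q a

/-- Mass function of a pair of variables that are independent given `θ`. -/
noncomputable def prodMass (g : Θ → A → ℝ≥0∞) (h : Θ → B → ℝ≥0∞) (θ : Θ) (ab : A × B) : ℝ≥0∞ :=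
  g θ ab.1 * h θ ab.2

lemma ne_top_of_sum_le_one {Q : A → ℝ≥0∞} (hQ : ∑ a, Q a ≤ 1) (a : A) : Q a ≠ ∞ :=
  ne_top_of_le_ne_top ENNReal.one_ne_top
    ((Finset.single_le_sum (fun _ _ ↦ zero_le) (Finset.mem_univ a)).trans hQ)

lemma sum_prod_mul_le_one [DecidableEq ι] {Q : A → ℝ≥0∞} {S : (ι → B) → ℝ≥0∞} (hQ : ∑ a, Q a ≤ 1)
    (hS : ∑ w, S w ≤ 1) : ∑ w, ∑ y : ι → A, (∏ u, Q (y u)) * S w ≤ 1 := by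
  simp_rw [← Finset.sum_mul, ← Finset.mul_sum, ← Fintype.prod_sum]
  exact mul_le_one' (Finset.prod_le_one' fun u _ ↦ hQ) hS

variable [IsProbabilityMeasure μ]

omit [Fintype A] [Fintype B] in
lemma iidMixture_prodMass_le {Q : A → ℝ≥0∞} (hQ : ∀ a, Q a ≠ ∞) (hK : K ≠ ∞)
    (hg : ∀ᵐ θ ∂μ, ∀ a, g θ a ≤ K * Q a) (x : ι → A) (w : ι → B) :
    iidMixture μ (prodMass g h) (fun u ↦ (x u, w u)) ≤
      K ^ Fintype.card ι * ((∏ u, Q (x u)) * iidMixture μ h w) := by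
  have hle := iidMixture_le_prod_mul μ (G := prodMass g h) (c := fun ab ↦ K * Q ab.1) (h := h)
    (ψ := Prod.snd) (fun ab ↦ ENNReal.mul_ne_top hK (hQ ab.1))
    (hg.mono fun θ hθ ab ↦ mul_le_mul_left (hθ ab.1) _) fun u ↦ (x u, w u)
  rw [Finset.prod_mul_distrib, Finset.prod_const, Finset.card_univ, mul_assoc] at hle
  exact hle

omit [Fintype A] [Fintype B] [IsProbabilityMeasure μ] in
lemma iidMixture_prodMass_swap (x : ι → A) (w : ι → B) :
    iidMixture μ (prodMass g h) (fun u ↦ (x u, w u)) =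
      iidMixture μ (prodMass h g) fun u ↦ (w u, x u) := by
  simp_rw [iidMixture, prodMass, mul_comm]

theorem exists_mass_iidMixture_le [DecidableEq ι] (hg1 : ∀ᵐ θ ∂μ, ∑ a, g θ a ≤ 1)
    (hh1 : ∀ᵐ θ ∂μ, ∑ b, h θ b ≤ 1) (hK : K ≠ ∞)
    (hred : HasRedundancyLE μ g K ∨ HasRedundancyLE μ h K) :
    ∃ R : (ι → B) × (ι → A) → ℝ≥0∞, ∑ b, R b ≤ 1 ∧ ∀ (σ : Equiv.Perm ι) w y,
      iidMixture μ (prodMass g h) (fun u ↦ (y (σ u), w u)) ≤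
        K ^ Fintype.card ι * R (w, y) := by
  rcases hred with ⟨Q, hQ, hle⟩ | ⟨Q, hQ, hle⟩
  · refine ⟨fun b ↦ (∏ u, Q (b.2 u)) * iidMixture μ h b.1, ?_, fun σ w y ↦ ?_⟩
    · rw [Fintype.sum_prod_type]
      exact sum_prod_mul_le_one hQ (sum_iidMixture_le_one μ hh1)
    · have hbound := iidMixture_prodMass_le (h := h) (ne_top_of_sum_le_one hQ) hK hle (y ∘ σ) w
      simp only [Function.comp_apply] at hbound
      rwa [Equiv.prod_comp σ fun u ↦ Q (y u)] at hbound
  · refine ⟨fun b ↦ (∏ u, Q (b.1 u)) * iidMixture μ g b.2, ?_, fun σ w y ↦ ?_⟩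
    · rw [Fintype.sum_prod_type_right]
      exact sum_prod_mul_le_one hQ (sum_iidMixture_le_one μ hg1)
    · have hbound := iidMixture_prodMass_le (h := g) (ne_top_of_sum_le_one hQ) hK hle w (y ∘ σ)
      rwa [iidMixture_comp_perm, ← iidMixture_prodMass_swap] at hbound

end Redundancy

section AnonymizedTraces

lemma shCondEntropy_comp_of_injective {Ω α α' β : Type*} [MeasurableSpace Ω] (μ : Measure Ω)
    (A : Ω → α) (B : Ω → β) {g : α → α'} (hg : Function.Injective g) :
    shCondEntropy μ (fun ω ↦ g (A ω)) B = shCondEntropy μ A B := by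
  have hpre (a : α) : (fun ω ↦ g (A ω)) ⁻¹' {g a} = A ⁻¹' {a} := by
    ext ω
    simp [hg.eq_iff]
  unfold shCondEntropy
  rw [← hg.tsum_eq]
  · simp_rw [hpre]
  · refine Function.support_subset_iff'.2 fun a' ha' ↦ ?_
    have hempty : (fun ω ↦ g (A ω)) ⁻¹' {a'} = ∅ :=
      Set.eq_empty_of_forall_notMem fun ω hω ↦ ha' ⟨A ω, hω⟩
    simp [hempty]

/-- Joint mass function of the random variables `A` and `B`. -/
noncomputable def jointMass {Ω α β : Type*} [MeasurableSpace Ω] (μ : Measure Ω) (A : Ω → α)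
    (B : Ω → β) (a : α) (b : β) : ℝ :=
  μ.real (A ⁻¹' {a} ∩ B ⁻¹' {b})

section JointMass

variable {Ω α β : Type*} [MeasurableSpace Ω] {μ : Measure Ω} {A : Ω → α} {B : Ω → β} [Fintype α]

lemma sum_jointMass_filter [IsFiniteMeasure μ] (hA : ∀ a, MeasurableSet (A ⁻¹' {a}))
    (p : α → Prop) [DecidablePred p] (b : β) :
    ∑ a with p a, jointMass μ A B a b = μ.real ({ω | p (A ω)} ∩ B ⁻¹' {b}) := by
  have hsum := sum_measureReal_preimage_singleton (μ := μ.restrict (B ⁻¹' {b}))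
    (Finset.univ.filter p) (fun a _ ↦ hA a)
  have hset : A ⁻¹' (Finset.univ.filter p : Finset α) = {ω | p (A ω)} := by
    ext ω
    simp
  have hmeas : MeasurableSet {ω | p (A ω)} := by
    rw [← hset, ← Finset.set_biUnion_preimage_singleton]
    exact Finset.measurableSet_biUnion _ fun a _ ↦ hA a
  rw [hset, measureReal_restrict_apply hmeas] at hsum
  rw [← hsum]
  exact Finset.sum_congr rfl fun a _ ↦ (measureReal_restrict_apply (hA a)).symm

lemma sum_jointMass [Fintype β] [IsProbabilityMeasure μ]
    (hAB : ∀ a b, MeasurableSet (A ⁻¹' {a} ∩ B ⁻¹' {b})) :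
    ∑ a, ∑ b, jointMass μ A B a b = 1 := by
  have hset (ab : α × β) : (fun ω ↦ (A ω, B ω)) ⁻¹' {ab} = A ⁻¹' {ab.1} ∩ B ⁻¹' {ab.2} := by
    ext ω
    simp [Prod.ext_iff]
  have hsum := sum_measureReal_preimage_singleton (μ := μ) (f := fun ω ↦ (A ω, B ω)) Finset.univ
    fun ab _ ↦ hset ab ▸ hAB ab.1 ab.2
  simp_rw [hset] at hsum
  rw [← Fintype.sum_prod_type']
  simpa [jointMass] using hsum

lemma shCondEntropy_comp_eq_condEntropy {γ : Type*} [Fintype β] [Fintype γ] [DecidableEq γ]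
    [IsFiniteMeasure μ] (hA : ∀ a, MeasurableSet (A ⁻¹' {a})) (f : α → γ) :
    shCondEntropy μ (fun ω ↦ f (A ω)) B = condEntropy (pushforwardFst f (jointMass μ A B)) := by
  have hmarginal (b : β) : ∑ a, jointMass μ A B a b = μ.real (B ⁻¹' {b}) := by
    simpa using sum_jointMass_filter (B := B) hA (fun _ ↦ True) b
  have hpush (c : γ) (b : β) : pushforwardFst f (jointMass μ A B) c b =
      μ.real ((fun ω ↦ f (A ω)) ⁻¹' {c} ∩ B ⁻¹' {b}) :=
    sum_jointMass_filter hA (fun a ↦ f a = c) b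
  simp_rw [shCondEntropy, tsum_fintype, condEntropy, sum_pushforwardFst, hmarginal, hpush]
  rfl

end JointMass

section Exchangeable

variable {ι β : Type*} [Fintype ι] [DecidableEq ι] [Fintype β]

lemma condEntropy_pushforwardFst_eval_eq {p : Equiv.Perm ι → β → ℝ}
    (hp : ∀ τ : Equiv.Perm ι, ∃ e : β ≃ β, ∀ σ b, p (σ * τ) (e b) = p σ b) (u v : ι) :
    condEntropy (pushforwardFst (fun σ : Equiv.Perm ι ↦ σ v) p) =
      condEntropy (pushforwardFst (fun σ : Equiv.Perm ι ↦ σ u) p) := by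
  obtain ⟨e, he⟩ := hp (Equiv.swap u v)
  rw [← condEntropy_comp_equiv (pushforwardFst (fun σ : Equiv.Perm ι ↦ σ u) p) e]
  congr 1
  ext c b
  refine Finset.sum_equiv (Equiv.mulRight (Equiv.swap u v)) (fun σ ↦ ?_) fun σ _ ↦ (he σ b).symm
  simp

theorem condEntropy_le_card_mul_condEntropy_eval {p : Equiv.Perm ι → β → ℝ}
    (hp0 : ∀ σ b, 0 ≤ p σ b)
    (hp : ∀ τ : Equiv.Perm ι, ∃ e : β ≃ β, ∀ σ b, p (σ * τ) (e b) = p σ b) (u : ι) :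
    condEntropy p ≤
      Fintype.card ι * condEntropy (pushforwardFst (fun σ : Equiv.Perm ι ↦ σ u) p) :=
  calc condEntropy p ≤ ∑ v, condEntropy (pushforwardFst (fun σ : Equiv.Perm ι ↦ σ v) p) :=
        condEntropy_le_sum_condEntropy_pushforwardFst hp0 DFunLike.coe_injective
    _ = _ := by
        rw [Finset.sum_congr rfl fun v _ ↦ condEntropy_pushforwardFst_eval_eq hp u v]
        simp

end Exchangeable

section Anonymization

variable {Ω ι A B : Type*}

/-- What the adversary observes: the training traces `W u` and the anonymized traces
`Y v = X (π⁻¹ v)`. -/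
def observation (π : Ω → Equiv.Perm ι) (X : Ω → ι → A) (W : Ω → ι → B) (ω : Ω) :
    (ι → B) × (ι → A) :=
  (W ω, fun v ↦ X ω ((π ω).symm v))

lemma preimage_inter_observation (π : Ω → Equiv.Perm ι) (X : Ω → ι → A) (W : Ω → ι → B)
    (σ : Equiv.Perm ι) (b : (ι → B) × (ι → A)) :
    π ⁻¹' {σ} ∩ observation π X W ⁻¹' {b} = {ω | π ω = σ ∧ X ω = b.2 ∘ σ ∧ W ω = b.1} := by
  ext ω
  simp only [Set.mem_inter_iff, Set.mem_preimage, Set.mem_singleton_iff, observation,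
    Prod.ext_iff, Set.mem_ofPred_eq]
  refine and_congr_right ?_
  rintro rfl
  rw [and_comm, ← Equiv.comp_symm_eq]
  rfl

variable [MeasurableSpace Ω] [Fintype ι]

/-- The permutation `π` is uniformly distributed and independent of the pair `(X, W)`, whose joint
mass function is `J`. -/
structure IsIndepUniformPerm (μ : Measure Ω) (π : Ω → Equiv.Perm ι) (X : Ω → ι → A)
    (W : Ω → ι → B) (J : (ι → A) → (ι → B) → ℝ≥0∞) : Prop where
  measurableSet_perm (σ : Equiv.Perm ι) : MeasurableSet {ω | π ω = σ}
  measurableSet_fst (x : ι → A) : MeasurableSet {ω | X ω = x}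
  measurableSet_snd (w : ι → B) : MeasurableSet {ω | W ω = w}
  measure_eq (σ : Equiv.Perm ι) (x : ι → A) (w : ι → B) :
    μ {ω | π ω = σ ∧ X ω = x ∧ W ω = w} = ((Fintype.card ι).factorial : ℝ≥0∞)⁻¹ * J x w

namespace IsIndepUniformPerm

variable {μ : Measure Ω} {π : Ω → Equiv.Perm ι} {X : Ω → ι → A} {W : Ω → ι → B}
  {J : (ι → A) → (ι → B) → ℝ≥0∞} {R : (ι → B) × (ι → A) → ℝ≥0∞} {K : ℝ}

lemma measurableSet_inter (h : IsIndepUniformPerm μ π X W J) (σ : Equiv.Perm ι)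
    (b : (ι → B) × (ι → A)) :
    MeasurableSet (π ⁻¹' {σ} ∩ observation π X W ⁻¹' {b}) := by
  rw [preimage_inter_observation]
  exact (h.measurableSet_perm σ).inter ((h.measurableSet_fst _).inter (h.measurableSet_snd _))

lemma jointMass_observation (h : IsIndepUniformPerm μ π X W J) (σ : Equiv.Perm ι)
    (b : (ι → B) × (ι → A)) :
    jointMass μ π (observation π X W) σ b =
      ((Fintype.card ι).factorial : ℝ)⁻¹ * (J (b.2 ∘ σ) b.1).toReal := by
  rw [jointMass, preimage_inter_observation, measureReal_def, h.measure_eq]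
  simp

lemma exists_equiv_jointMass_eq (h : IsIndepUniformPerm μ π X W J)
    (hJ : ∀ (τ : Equiv.Perm ι) x w, J (x ∘ τ) (w ∘ τ) = J x w) (τ : Equiv.Perm ι) :
    ∃ e : (ι → B) × (ι → A) ≃ (ι → B) × (ι → A), ∀ σ b,
      jointMass μ π (observation π X W) (σ * τ) (e b) =
        jointMass μ π (observation π X W) σ b := by
  refine ⟨(Equiv.arrowCongr τ.symm (Equiv.refl B)).prodCongr (Equiv.refl _), fun σ b ↦ ?_⟩
  rw [h.jointMass_observation, h.jointMass_observation, ← hJ τ (b.2 ∘ σ)]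
  rfl

lemma jointMass_le [Fintype A] [Fintype B] [DecidableEq ι] (h : IsIndepUniformPerm μ π X W J)
    (hK : 0 < K) (hR : ∑ b, R b ≤ 1)
    (hJR : ∀ (σ : Equiv.Perm ι) w y,
      J (y ∘ σ) w ≤ ENNReal.ofReal K ^ Fintype.card ι * R (w, y))
    (σ : Equiv.Perm ι) (b : (ι → B) × (ι → A)) :
    jointMass μ π (observation π X W) σ b ≤
      K ^ Fintype.card ι / (Fintype.card ι).factorial * (R b).toReal := by
  have hfin : ENNReal.ofReal K ^ Fintype.card ι * R b ≠ ∞ :=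
    ENNReal.mul_ne_top (ENNReal.pow_ne_top ENNReal.ofReal_ne_top) (ne_top_of_sum_le_one hR b)
  have hle := ENNReal.toReal_mono hfin (hJR σ b.1 b.2)
  rw [ENNReal.toReal_mul, ENNReal.toReal_pow, ENNReal.toReal_ofReal hK.le] at hle
  rw [h.jointMass_observation, div_mul_eq_mul_div, div_eq_inv_mul]
  gcongr

theorem log_factorial_div_sub_log_le_shCondEntropy [Fintype A] [Fintype B] [DecidableEq ι]
    [IsProbabilityMeasure μ] (h : IsIndepUniformPerm μ π X W J)
    (hJ : ∀ (τ : Equiv.Perm ι) x w, J (x ∘ τ) (w ∘ τ) = J x w) (hK : 0 < K)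
    (hR : ∑ b, R b ≤ 1)
    (hJR : ∀ (σ : Equiv.Perm ι) w y,
      J (y ∘ σ) w ≤ ENNReal.ofReal K ^ Fintype.card ι * R (w, y)) (u : ι) :
    Real.log (Fintype.card ι).factorial / Fintype.card ι - Real.log K ≤
      shCondEntropy μ (fun ω ↦ π ω u) (observation π X W) := by
  have hR' : ∑ b, (R b).toReal ≤ 1 := by
    rw [← ENNReal.toReal_sum fun b _ ↦ ne_top_of_sum_le_one hR b]
    exact ENNReal.toReal_le_of_le_ofReal zero_le_one (by simpa using hR)
  have hentropy := neg_log_le_condEntropy (p := jointMass μ π (observation π X W))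
    (fun _ _ ↦ measureReal_nonneg) (sum_jointMass h.measurableSet_inter)
    (fun _ ↦ ENNReal.toReal_nonneg) hR' (by positivity) (h.jointMass_le hK hR hJR)
  have hmarginal := condEntropy_le_card_mul_condEntropy_eval
    (p := jointMass μ π (observation π X W)) (fun _ _ ↦ measureReal_nonneg)
    (h.exists_equiv_jointMass_eq hJ) u
  rw [Real.log_div (by positivity) (by positivity), Real.log_pow] at hentropy
  rw [shCondEntropy_comp_eq_condEntropy h.measurableSet_perm fun σ ↦ σ u]
  have hcard : (0 : ℝ) < Fintype.card ι := by exact_mod_cast Fintype.card_pos_iff.2 ⟨u⟩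
  rw [div_sub' hcard.ne', div_le_iff₀' hcard]
  linarith

end IsIndepUniformPerm

end Anonymization

end AnonymizedTraces

section MarkovLaw

variable {r d : ℕ} {T : (Fin d → ℝ) → Matrix (Fin r) (Fin r) ℝ} {π0 : (Fin d → ℝ) → Fin r → ℝ}
  {μP : Measure (Fin d → ℝ)}

/-- Mass function of a sample path of length `s` for the chain with parameter `θ`. -/
noncomputable def traceMass (T : (Fin d → ℝ) → Matrix (Fin r) (Fin r) ℝ)
    (π0 : (Fin d → ℝ) → Fin r → ℝ) (s : ℕ) (θ : Fin d → ℝ) (x : Fin s → Fin r) : ℝ≥0∞ :=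
  pathLaw (T θ) (π0 θ) s {x}

/-- Joint mass function of the actual and the training traces of all users. -/
noncomputable def tracesMass (T : (Fin d → ℝ) → Matrix (Fin r) (Fin r) ℝ)
    (π0 : (Fin d → ℝ) → Fin r → ℝ) (μP : Measure (Fin d → ℝ)) {n m l : ℕ}
    (x : Fin n → Fin m → Fin r) (w : Fin n → Fin l → Fin r) : ℝ≥0∞ :=
  iidMixture μP (prodMass (traceMass T π0 m) (traceMass T π0 l)) fun u ↦ (x u, w u)

-- A kernel that is not a.e. measurable makes `Measure.bind` return the junk value `0`.
lemma markovLaw_univ_prod_singleton {n m l : ℕ} (h0 : markovLaw n m l r d T π0 μP ≠ 0)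
    (x : Fin n → Fin m → Fin r) (w : Fin n → Fin l → Fin r) :
    markovLaw n m l r d T π0 μP (Set.univ ×ˢ {x} ×ˢ {w}) = tracesMass T π0 μP x w := by
  unfold markovLaw at h0 ⊢
  rw [Measure.bind_apply]
  · refine lintegral_congr fun p ↦ ?_
    rw [Measure.prod_prod, Measure.prod_prod, measure_univ, one_mul, ← Set.univ_pi_singleton x,
      ← Set.univ_pi_singleton w, Measure.pi_pi, Measure.pi_pi, ← Finset.prod_mul_distrib]
    rfl
  · exact MeasurableSet.univ.prod ((measurableSet_singleton x).prod (measurableSet_singleton w))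
  · by_contra hmeas
    exact h0 (by rw [Measure.bind, Measure.map_of_not_aemeasurable hmeas, Measure.join_zero])

lemma tracesMass_comp_perm [SigmaFinite μP] {n m l : ℕ} (τ : Equiv.Perm (Fin n))
    (x : Fin n → Fin m → Fin r) (w : Fin n → Fin l → Fin r) :
    tracesMass T π0 μP (x ∘ τ) (w ∘ τ) = tracesMass T π0 μP x w :=
  iidMixture_comp_perm μP _ (fun u ↦ (x u, w u)) τ

variable {E : Finset (Fin r × Fin r)}

lemma hasRedundancyLE_traceMass (hchain : ∀ᵐ θ ∂μP, IsMarkovChainOn E (T θ) (π0 θ)) (s : ℕ) :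
    HasRedundancyLE μP (traceMass T π0 s) (ENNReal.ofReal (pathRedundancy E s)) := by
  obtain ⟨Q, hQ, hle⟩ := exists_mass_pathLaw_le E s
  exact ⟨Q, hQ, hchain.mono fun θ hθ ↦ hle _ _ hθ⟩

lemma exists_mass_tracesMass_le [IsProbabilityMeasure μP]
    (hchain : ∀ᵐ θ ∂μP, IsMarkovChainOn E (T θ) (π0 θ)) (n m l : ℕ) :
    ∃ R : (Fin n → Fin l → Fin r) × (Fin n → Fin m → Fin r) → ℝ≥0∞, ∑ b, R b ≤ 1 ∧
      ∀ (σ : Equiv.Perm (Fin n)) w y, tracesMass T π0 μP (y ∘ σ) w ≤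
        ENNReal.ofReal (pathRedundancy E (min m l)) ^ Fintype.card (Fin n) * R (w, y) := by
  have hsum (s : ℕ) : ∀ᵐ θ ∂μP, ∑ x, traceMass T π0 s θ x ≤ 1 :=
    hchain.mono fun θ hθ ↦ (hθ.sum_pathLaw s).le
  refine exists_mass_iidMixture_le (hsum m) (hsum l) ENNReal.ofReal_ne_top ?_
  rcases le_total m l with hml | hlm
  · rw [min_eq_left hml]
    exact Or.inl (hasRedundancyLE_traceMass hchain m)
  · rw [min_eq_right hlm]
    exact Or.inr (hasRedundancyLE_traceMass hchain l)

variable {Ω : Type*} [MeasurableSpace Ω] {μ : Measure Ω} [IsProbabilityMeasure μ] {n m l : ℕ}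
  {π : Ω → Equiv.Perm (Fin n)} {X : Ω → Fin n → Fin m → Fin r} {W : Ω → Fin n → Fin l → Fin r}

lemma isIndepUniformPerm_tracesMass (hπ : ∀ σ, MeasurableSet {ω | π ω = σ})
    (hX : Measurable X) (hW : Measurable W)
    (hjoint : ∀ σ x w, μ {ω | π ω = σ ∧ X ω = x ∧ W ω = w} =
      (n.factorial : ℝ≥0∞)⁻¹ * markovLaw n m l r d T π0 μP (Set.univ ×ˢ {x} ×ˢ {w})) :
    IsIndepUniformPerm μ π X W (tracesMass T π0 μP) := by
  have h0 : markovLaw n m l r d T π0 μP ≠ 0 := by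
    intro hzero
    have hcover : (⋃ σ, ⋃ x, ⋃ w, {ω | π ω = σ ∧ X ω = x ∧ W ω = w}) = Set.univ := by
      ext ω
      simp
    refine one_ne_zero (α := ℝ≥0∞) ?_
    rw [← measure_univ (μ := μ), ← hcover]
    simp [measure_iUnion_null_iff, hjoint, hzero]
  refine ⟨hπ, fun x ↦ hX (measurableSet_singleton x), fun w ↦ hW (measurableSet_singleton w),
    fun σ x w ↦ ?_⟩
  rw [hjoint, markovLaw_univ_prod_singleton h0, Fintype.card_fin]

theorem log_factorial_div_sub_log_pathRedundancy_le_shCondEntropy [IsProbabilityMeasure μP]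
    (hchain : ∀ᵐ θ ∂μP, IsMarkovChainOn E (T θ) (π0 θ))
    (h : IsIndepUniformPerm μ π X W (tracesMass T π0 μP)) (hn : 0 < n) :
    Real.log n.factorial / n - Real.log (pathRedundancy E (min m l)) ≤
      shCondEntropy μ (fun ω ↦ if hn : 0 < n then ((π ω ⟨0, hn⟩ : Fin n) : ℕ) else 0)
        (observation π X W) := by
  obtain ⟨R, hR, hle⟩ := exists_mass_tracesMass_le hchain n m l
  obtain ⟨θ, hθ⟩ := hchain.exists
  simp only [dif_pos hn]
  rw [shCondEntropy_comp_of_injective μ (fun ω ↦ π ω ⟨0, hn⟩) _ Fin.val_injective]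
  simpa only [Fintype.card_fin] using h.log_factorial_div_sub_log_le_shCondEntropy
    tracesMass_comp_perm (zero_lt_one.trans_le (hθ.one_le_pathRedundancy _)) hR hle ⟨0, hn⟩

end MarkovLaw

section Asymptotics

lemma log_sub_one_le_log_factorial_div (n : ℕ) :
    Real.log n - 1 ≤ Real.log n.factorial / n := by
  rcases n.eq_zero_or_pos with rfl | hn
  · simp
  have hn0 : (0 : ℝ) < n := by exact_mod_cast hn
  have hlog := Real.log_le_log (by positivity) (Real.pow_div_factorial_le_exp n hn0.le n)
  rw [Real.log_div (by positivity) (by positivity), Real.log_pow, Real.log_exp] at hlog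
  rw [le_div_iff₀ hn0]
  linarith

lemma exists_eventually_add_one_le {s : ℕ → ℝ} {e : ℝ}
    (hs : s =O[atTop] fun n : ℕ ↦ (n : ℝ) ^ e) :
    ∃ c > 0, ∀ᶠ n : ℕ in atTop, s n + 1 ≤ c * (n : ℝ) ^ max e 0 := by
  obtain ⟨c, hc, hle⟩ := hs.exists_pos
  refine ⟨c + 1, by positivity, ?_⟩
  filter_upwards [hle.bound, eventually_ge_atTop 1] with n hn hn1
  have hn1' : (1 : ℝ) ≤ n := by exact_mod_cast hn1
  have hexp : (n : ℝ) ^ e ≤ (n : ℝ) ^ max e 0 :=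
    Real.rpow_le_rpow_of_exponent_le hn1' (le_max_left _ _)
  rw [Real.norm_of_nonneg (r := (n : ℝ) ^ e) (by positivity)] at hn
  calc s n + 1 ≤ c * (n : ℝ) ^ max e 0 + (n : ℝ) ^ max e 0 :=
        add_le_add ((Real.le_norm_self _).trans (hn.trans (by gcongr)))
          (Real.one_le_rpow hn1' (le_max_right _ _))
    _ = (c + 1) * (n : ℝ) ^ max e 0 := by ring

lemma tendsto_log_factorial_div_sub_log_mul_rpow {s : ℕ → ℝ} {C b e : ℝ} (hC : 0 < C)
    (hb : 0 ≤ b) (hbe : b * e < 1) (hs0 : ∀ n, 0 ≤ s n)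
    (hs : s =O[atTop] fun n : ℕ ↦ (n : ℝ) ^ e) :
    Tendsto (fun n : ℕ ↦ Real.log n.factorial / n - Real.log (C * (s n + 1) ^ b))
      atTop atTop := by
  obtain ⟨c, hc, hle⟩ := exists_eventually_add_one_le hs
  have hγ : 0 < 1 - b * max e 0 := by
    rw [sub_pos, mul_max_of_nonneg _ _ hb]
    simpa using hbe
  refine tendsto_atTop_mono' atTop ?_ <| tendsto_atTop_add_const_right atTop
    (-(1 + Real.log C + b * Real.log c)) <|
      (Real.tendsto_log_atTop.comp tendsto_natCast_atTop_atTop).const_mul_atTop hγ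
  filter_upwards [hle, eventually_gt_atTop 0] with n hn hn0
  have hn0' : (0 : ℝ) < n := by exact_mod_cast hn0
  have hs1 : 0 < s n + 1 := by linarith [hs0 n]
  have hlog : Real.log (s n + 1) ≤ Real.log c + max e 0 * Real.log n := by
    rw [← Real.log_rpow hn0', ← Real.log_mul hc.ne' (by positivity)]
    exact Real.log_le_log hs1 hn
  rw [Real.log_mul hC.ne' (by positivity), Real.log_rpow hs1, Function.comp_apply]
  linarith [log_sub_one_le_log_factorial_div n, mul_le_mul_of_nonneg_left hlog hb]

lemma tendsto_log_factorial_div_sub_log_pathRedundancy {r : ℕ} {E : Finset (Fin r × Fin r)}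
    (hrE : r < E.card) {s : ℕ → ℕ} {α : ℝ} (hα : 0 < α)
    (hs : (fun n ↦ (s n : ℝ)) =O[atTop] fun n : ℕ ↦ (n : ℝ) ^ (2 / ((E.card : ℝ) - r) - α)) :
    Tendsto (fun n : ℕ ↦ Real.log n.factorial / n - Real.log (pathRedundancy E (s n)))
      atTop atTop := by
  have hdim : (0 : ℝ) < (E.card : ℝ) - r := sub_pos.2 (by exact_mod_cast hrE)
  obtain ⟨ij, -⟩ := Finset.card_pos.1 (r.zero_le.trans_lt hrE)
  have hr : (0 : ℝ) < r := by exact_mod_cast ij.1.pos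
  have hexponent : ((E.card : ℝ) - r) / 2 * (2 / ((E.card : ℝ) - r) - α) < 1 :=
    calc ((E.card : ℝ) - r) / 2 * (2 / ((E.card : ℝ) - r) - α)
        = 1 - ((E.card : ℝ) - r) / 2 * α := by field_simp
      _ < 1 := sub_lt_self _ (by positivity)
  simp_rw [pathRedundancy, Fintype.card_fin, ← mul_assoc]
  exact tendsto_log_factorial_div_sub_log_mul_rpow (by positivity) (by positivity) hexponent
    (fun n ↦ (s n).cast_nonneg) hs

end Asymptotics

section SimplexRegion

lemma measurableSet_simplexRegion (d : ℕ) : MeasurableSet (simplexRegion d) := by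
  unfold simplexRegion
  measurability

lemma ae_mem_of_withDensity {Ω : Type*} [MeasurableSpace Ω] {μ : Measure Ω} {s : Set Ω}
    (hs : MeasurableSet s) {f : Ω → ℝ≥0∞} (hf : ∀ x ∉ s, f x = 0) :
    ∀ᵐ x ∂μ.withDensity f, x ∈ s := by
  rw [ae_iff, ← Set.compl_def, withDensity_apply f hs.compl,
    setLIntegral_congr_fun hs.compl hf]
  simp

end SimplexRegion

theorem markov_perfect_anonymity_general
    {r d : ℕ} {E : Finset (Fin r × Fin r)} (hrE : r < E.card)
    {T : (Fin d → ℝ) → Matrix (Fin r) (Fin r) ℝ} {π0 : (Fin d → ℝ) → Fin r → ℝ}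
    {μP : Measure (Fin d → ℝ)} [IsProbabilityMeasure μP]
    (hchain : ∀ᵐ θ ∂μP, IsMarkovChainOn E (T θ) (π0 θ))
    {m l : ℕ → ℕ} {α : ℝ} (hα : 0 < α)
    (hml : (fun n ↦ ((min (m n) (l n) : ℕ) : ℝ)) =O[atTop]
      fun n : ℕ ↦ (n : ℝ) ^ (2 / ((E.card : ℝ) - r) - α))
    {Ω : ℕ → Type*} [∀ n, MeasurableSpace (Ω n)]
    {μ : ∀ n, Measure (Ω n)} [∀ n, IsProbabilityMeasure (μ n)]
    {X : ∀ n, Ω n → Fin n → Fin (m n) → Fin r} {W : ∀ n, Ω n → Fin n → Fin (l n) → Fin r}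
    {π : ∀ n, Ω n → Equiv.Perm (Fin n)}
    (hlaw : ∀ n, IsIndepUniformPerm (μ n) (π n) (X n) (W n) (tracesMass T π0 μP)) :
    Tendsto (fun n ↦
        shCondEntropy (μ n)
          (fun ω ↦ if hn : 0 < n then ((π n ω ⟨0, hn⟩ : Fin n) : ℕ) else 0)
          (fun ω ↦ (W n ω, fun v ↦ X n ω ((π n ω).symm v))))
      atTop atTop := by
  refine tendsto_atTop_mono' atTop ?_
    (tendsto_log_factorial_div_sub_log_pathRedundancy hrE hα hml)
  filter_upwards [eventually_gt_atTop 0] with n hn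
  exact log_factorial_div_sub_log_pathRedundancy_le_shCondEntropy hchain (hlaw n) hn

/-- **`r`-state Markov chain model, perfect anonymity.**  All users share a common
irreducible aperiodic Markov chain structure on `{0, …, r-1}` with edge set `E`; each user
has its own transition matrix, parameterized by `|E| - r` free transition probabilities
drawn from a bounded density on the simplex region.  If at least one of the trace lengths
`m n`, `l n` is at most `c * n ^ (2/(|E|-r) - α)` for some `c, α > 0`, then
`H(Π(1) | W, Y) → ∞` as `n → ∞`, where `Y` is the anonymized version of `X`
(`Y_{Π(u)} = X_u`, i.e. `Y v = X (Π⁻¹ v)`) and `Π` is a uniformly random permutation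
independent of the data. -/
theorem markov_perfect_anonymity
    (r : ℕ) (hr : 2 ≤ r)
    (E : Finset (Fin r × Fin r)) (hrE : r < E.card)
    (d : ℕ) (hd : d = E.card - r)
    -- the parameterization of the transition matrices by the free transition probabilities:
    (T : (Fin d → ℝ) → Matrix (Fin r) (Fin r) ℝ)
    (hstoch : ∀ p ∈ simplexRegion d, (∀ i j, 0 ≤ T p i j) ∧ ∀ i, ∑ j, T p i j = 1)
    (hsupp : ∀ p ∈ simplexRegion d, ∀ i j, 0 < T p i j ↔ (i, j) ∈ E)
    -- irreducibility and aperiodicity (primitivity) of the common chain structure: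
    (hprim : ∀ p ∈ simplexRegion d, ∃ k : ℕ, 0 < k ∧ ∀ i j, 0 < (T p ^ k) i j)
    (hTinj : Set.InjOn T (simplexRegion d))
    -- the (stationary) initial distribution of each chain:
    (π0 : (Fin d → ℝ) → Fin r → ℝ)
    (hπ0 : ∀ p ∈ simplexRegion d,
      (∀ i, 0 ≤ π0 p i) ∧ (∑ i, π0 p i = 1) ∧ ∀ j, ∑ i, π0 p i * T p i j = π0 p j)
    (f : (Fin d → ℝ) → ℝ) (δ₁ δ₂ : ℝ) (hδ₁ : 0 < δ₁)
    (μP : Measure (Fin d → ℝ)) [IsProbabilityMeasure μP]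
    (hμP : μP = volume.withDensity fun x => ENNReal.ofReal (f x))
    (hf0 : ∀ x ∉ simplexRegion d, f x = 0)
    (hf : ∀ x ∈ simplexRegion d, δ₁ < f x ∧ f x < δ₂)
    (m l : ℕ → ℕ) (c α : ℝ) (hc : 0 < c) (hα : 0 < α)
    (hml : (∀ n : ℕ, (m n : ℝ) ≤ c * (n : ℝ) ^ (2 / ((E.card : ℝ) - r) - α)) ∨
           (∀ n : ℕ, (l n : ℝ) ≤ c * (n : ℝ) ^ (2 / ((E.card : ℝ) - r) - α)))
    (Ω : ℕ → Type) (mΩ : ∀ n, MeasurableSpace (Ω n))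
    (μ : ∀ n, Measure (Ω n)) (hμ : ∀ n, IsProbabilityMeasure (μ n))
    (P : ∀ n, Ω n → Fin n → Fin d → ℝ)
    (X : ∀ n, Ω n → Fin n → Fin (m n) → Fin r)
    (W : ∀ n, Ω n → Fin n → Fin (l n) → Fin r)
    (prm : ∀ n, Ω n → Equiv.Perm (Fin n))
    (hP : ∀ n, Measurable (P n)) (hX : ∀ n, Measurable (X n))
    (hW : ∀ n, Measurable (W n))
    (hprm : ∀ n (σ : Equiv.Perm (Fin n)), MeasurableSet {ω | prm n ω = σ})
    -- `Π` is uniform on the `n!` permutations, independent of `(P, X, W)`, and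
    -- `(P, X, W)` has the Markov chain model law described above:
    (hjoint : ∀ n (σ : Equiv.Perm (Fin n))
        (s : Set ((Fin n → Fin d → ℝ) ×
          (Fin n → Fin (m n) → Fin r) × (Fin n → Fin (l n) → Fin r))),
        MeasurableSet s →
        μ n {ω | prm n ω = σ ∧ (P n ω, X n ω, W n ω) ∈ s} =
          ((n.factorial : ℝ≥0∞))⁻¹ * markovLaw n (m n) (l n) r d T π0 μP s) :
    Tendsto (fun n =>
        shCondEntropy (μ n)
          (fun ω => if hn : 0 < n then ((prm n ω ⟨0, hn⟩ : Fin n) : ℕ) else 0)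
          (fun ω => (W n ω, fun v => X n ω ((prm n ω).symm v))))
      atTop atTop := by
  have hregion : ∀ᵐ θ ∂μP, θ ∈ simplexRegion d :=
    hμP ▸ ae_mem_of_withDensity (measurableSet_simplexRegion d) fun x hx ↦ by simp [hf0 x hx]
  have hchain : ∀ᵐ θ ∂μP, IsMarkovChainOn E (T θ) (π0 θ) := hregion.mono fun θ hθ ↦
    { nonneg := (hstoch θ hθ).1
      sum_eq_one := (hstoch θ hθ).2
      mem_of_ne_zero := fun i j hij ↦ (hsupp θ hθ i j).1 (((hstoch θ hθ).1 i j).lt_of_ne' hij)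
      init_nonneg := (hπ0 θ hθ).1
      sum_init := (hπ0 θ hθ).2.1 }
  have hmin : (fun n ↦ ((min (m n) (l n) : ℕ) : ℝ)) =O[atTop]
      fun n : ℕ ↦ (n : ℝ) ^ (2 / ((E.card : ℝ) - r) - α) := by
    refine Asymptotics.IsBigO.of_bound c (Eventually.of_forall fun n ↦ ?_)
    rw [Real.norm_of_nonneg (by positivity), Real.norm_of_nonneg (by positivity), Nat.cast_min]
    exact min_le_iff.2 (hml.imp (· n) (· n))
  refine markov_perfect_anonymity_general hrE hchain hα hmin fun n ↦
    isIndepUniformPerm_tracesMass (hprm n) (hX n) (hW n) fun σ x w ↦ ?_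
  rw [← hjoint n σ _ (MeasurableSet.univ.prod
    ((measurableSet_singleton x).prod (measurableSet_singleton w)))]
  simp
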